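/- arXiv:1408.1847 — 7 statements merged into one kernel-verified Lean document; each statement's English description precedes it below -/
import Mathlib

section
/- Let N, n, n₁ be positive integers with n₁ ≤ √n. Let X₁, X₂ ∈ ℝ^N be vectors with nonnegative entries and set X = X₁ + X₂. Assume ‖X‖² ≥ n and ‖X₁‖ ≤ n₁. Let ε₂ ≥ 0 and let a ∈ ℝ satisfy (1 − ε₂)‖X₂‖² ≤ a ≤ (1 + ε₂)‖X₂‖². Then, with ε = ε₂ + 3n₁/√n, we have (1 − ε)‖X‖² ≤ a ≤ (1 + ε)‖X‖². (This is the deterministic core of the paper's Lemma on F₂ estimation with a discarded prefix: X₁ and X₂ are the frequency vectors of the prefix of length n₁ and of the remaining n − n₁ stream items, so that ‖X‖² = F₂ of the whole sequence, ‖X₁‖ ≤ n₁ and ‖X‖² ≥ n hold automatically, and a is the sketch-based (1 ± ε₂)-estimate of ‖X₂‖².) -/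
/-!
Nonnegativity of the entries gives `‖X₂‖ ≤ ‖X‖` coordinatewise, where `X = X₁ + X₂`. This settles the
upper bound. For the lower bound put `δ = n₁ / √n ≤ 1`. Since `‖X‖ ≥ √n`, the discarded prefix
satisfies `‖X₁‖ ≤ n₁ ≤ δ‖X‖`, so the triangle inequality gives `‖X₂‖ ≥ (1 - δ)‖X‖ ≥ 0` and hence
`‖X₂‖² ≥ (1 - 2δ)‖X‖²`. Bounding the estimation error by `ε₂‖X₂‖² ≤ ε₂‖X‖²`, instead of
multiplying the two factors, avoids any need for `ε₂ ≤ 1` and yields `a ≥ (1 - 2δ - ε₂)‖X‖²`.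
-/


/-- Deterministic core of the F₂ prefix-discarding lemma. -/
theorem f2_prefix_discard (N n n₁ : ℕ) (hN : 0 < N) (hn : 0 < n) (hn₁ : 0 < n₁)
    (hn₁n : (n₁ : ℝ) ≤ Real.sqrt n)
    (X₁ X₂ : EuclideanSpace ℝ (Fin N))
    (hX₁pos : ∀ i, 0 ≤ X₁ i) (hX₂pos : ∀ i, 0 ≤ X₂ i)
    (hXlb : (n : ℝ) ≤ ‖X₁ + X₂‖ ^ 2)
    (hX₁ub : ‖X₁‖ ≤ (n₁ : ℝ))
    (ε₂ a : ℝ) (hε₂ : 0 ≤ ε₂)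
    (ha₁ : (1 - ε₂) * ‖X₂‖ ^ 2 ≤ a) (ha₂ : a ≤ (1 + ε₂) * ‖X₂‖ ^ 2) :
    (1 - (ε₂ + 3 * (n₁ : ℝ) / Real.sqrt n)) * ‖X₁ + X₂‖ ^ 2 ≤ a ∧
      a ≤ (1 + (ε₂ + 3 * (n₁ : ℝ) / Real.sqrt n)) * ‖X₁ + X₂‖ ^ 2 := by
  have hle : ‖X₂‖ ^ 2 ≤ ‖X₁ + X₂‖ ^ 2 := by
    rw [EuclideanSpace.real_norm_sq_eq, EuclideanSpace.real_norm_sq_eq]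
    refine Finset.sum_le_sum fun i _ => ?_
    have h1 := hX₁pos i
    have h2 := hX₂pos i
    rw [PiLp.add_apply]
    gcongr
    linarith
  have hs : 0 < Real.sqrt n := Real.sqrt_pos.mpr (by exact_mod_cast hn)
  have hsx : Real.sqrt n ≤ ‖X₁ + X₂‖ := Real.sqrt_le_iff.mpr ⟨norm_nonneg _, hXlb⟩
  rw [mul_div_assoc]
  set δ : ℝ := (n₁ : ℝ) / Real.sqrt n with hδ
  have hδ0 : 0 ≤ δ := by positivity
  have hδ1 : δ ≤ 1 := (div_le_one hs).mpr hn₁n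
  have hX₁δ : ‖X₁‖ ≤ δ * ‖X₁ + X₂‖ :=
    calc ‖X₁‖ ≤ n₁ := hX₁ub
      _ = δ * Real.sqrt n := (div_mul_cancel₀ _ hs.ne').symm
      _ ≤ δ * ‖X₁ + X₂‖ := by gcongr
  have hlow : (1 - δ) * ‖X₁ + X₂‖ ≤ ‖X₂‖ := by
    have := norm_add_le X₁ X₂
    linarith
  have hsq : ((1 - δ) * ‖X₁ + X₂‖) ^ 2 ≤ ‖X₂‖ ^ 2 :=
    pow_le_pow_left₀ (mul_nonneg (sub_nonneg.mpr hδ1) (norm_nonneg _)) hlow 2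
  have herr : ε₂ * ‖X₂‖ ^ 2 ≤ ε₂ * ‖X₁ + X₂‖ ^ 2 := by gcongr
  have hδx : 0 ≤ δ * ‖X₁ + X₂‖ ^ 2 := by positivity
  have hδδx : 0 ≤ δ ^ 2 * ‖X₁ + X₂‖ ^ 2 := by positivity
  constructor <;> linarith
end

section
/- Let P = (p₁, …, pₙ) be a finite family of points in ℝ^d, let k ≥ 1, let C* = {c*₁, …, c*ₖ} ⊆ ℝ^d be a set of k centers and let C̃ ⊆ ℝ^d be a finite nonempty set of centers. Suppose σ : {1,…,n} → {1,…,k} is a nearest-center assignment for C*, i.e. ‖pᵢ − c*_{σ(i)}‖ = dist(pᵢ, C*) for every i, and suppose every j ∈ {1,…,k} satisfies |σ⁻¹(j)| ≥ f for some integer f ≥ 1. If cost(C̃, P) ≤ 2·cost(C*, P) (C̃ is a 2-approximate k-means solution), then max_{j ∈ [k]} dist(c*ⱼ, C̃)² ≤ 12·cost(C*, P)/f. -/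
/-!
For each point `p` of the cluster of `c*ⱼ`, the triangle inequality and `(a + b)² ≤ 2 (a² + b²)`
give `dist(c*ⱼ, C̃)² ≤ 2 (dist(p, C*)² + dist(p, C̃)²)`. Summing over the at least `f` points of
the cluster, and enlarging the right-hand side to a sum over all of `P`, bounds
`f · dist(c*ⱼ, C̃)²` by `2 (cost(C*, P) + cost(C̃, P)) ≤ 6 · cost(C*, P)`, which is already half of
the claimed bound.
-/

open Metric Finset

/-- If every cluster of an optimal `k`-means solution `C*` contains at least `f` points and
`C̃` is a 2-approximate solution, then every center of `C*` has a point of `C̃` within squared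
distance `12 · cost(C*, P) / f`. -/
theorem kmeans_centers_close {d n k : ℕ} (hk : 1 ≤ k)
    (P : Fin n → EuclideanSpace ℝ (Fin d))
    (cstar : Fin k → EuclideanSpace ℝ (Fin d))
    (Ct : Finset (EuclideanSpace ℝ (Fin d))) (hCt : Ct.Nonempty)
    (σ : Fin n → Fin k)
    (hσ : ∀ i, ‖P i - cstar (σ i)‖ = infDist (P i) (Set.range cstar))
    (f : ℕ) (hf : 1 ≤ f)
    (hcount : ∀ j : Fin k, f ≤ (Finset.univ.filter fun i => σ i = j).card)
    (happrox : ∑ i, infDist (P i) (Ct : Set (EuclideanSpace ℝ (Fin d))) ^ 2 ≤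
      2 * ∑ i, infDist (P i) (Set.range cstar) ^ 2) :
    ∀ j : Fin k, infDist (cstar j) (Ct : Set (EuclideanSpace ℝ (Fin d))) ^ 2 ≤
      12 * (∑ i, infDist (P i) (Set.range cstar) ^ 2) / f := by
  intro j
  have hf' : (0 : ℝ) < f := by exact_mod_cast hf
  rw [le_div_iff₀ hf']
  set T : Set (EuclideanSpace ℝ (Fin d)) := (Ct : Set (EuclideanSpace ℝ (Fin d)))
  set C := Set.range cstar
  have hpt : ∀ i ∈ Finset.univ.filter (fun i => σ i = j),
      infDist (cstar j) T ^ 2 ≤ 2 * (infDist (P i) C ^ 2 + infDist (P i) T ^ 2) := by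
    intro i hi
    have hj : σ i = j := (Finset.mem_filter.mp hi).2
    have h1 : infDist (cstar j) T ≤ infDist (P i) T + dist (cstar j) (P i) :=
      infDist_le_infDist_add_dist
    have h2 : dist (cstar j) (P i) = infDist (P i) C := by
      rw [dist_comm, dist_eq_norm, ← hj, hσ i]
    rw [h2] at h1
    have h3 : 0 ≤ infDist (cstar j) T := infDist_nonneg
    nlinarith [sq_nonneg (infDist (P i) C - infDist (P i) T)]
  have hcard : (f : ℝ) ≤ ((Finset.univ.filter fun i => σ i = j).card : ℝ) := by
    exact_mod_cast hcount j
  have hcost : 0 ≤ ∑ i, infDist (P i) C ^ 2 := Finset.sum_nonneg fun i _ => sq_nonneg _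
  calc infDist (cstar j) T ^ 2 * f
      ≤ infDist (cstar j) T ^ 2 * ((Finset.univ.filter fun i => σ i = j).card : ℝ) := by
        gcongr
    _ = ∑ i ∈ Finset.univ.filter (fun i => σ i = j), infDist (cstar j) T ^ 2 := by
        rw [Finset.sum_const, nsmul_eq_mul, mul_comm]
    _ ≤ ∑ i ∈ Finset.univ.filter (fun i => σ i = j),
          2 * (infDist (P i) C ^ 2 + infDist (P i) T ^ 2) := Finset.sum_le_sum hpt
    _ ≤ ∑ i, 2 * (infDist (P i) C ^ 2 + infDist (P i) T ^ 2) :=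
        Finset.sum_le_sum_of_subset_of_nonneg (Finset.filter_subset _ _)
          fun i _ _ => by positivity
    _ = 2 * (∑ i, infDist (P i) C ^ 2 + ∑ i, infDist (P i) T ^ 2) := by
        rw [← Finset.mul_sum, Finset.sum_add_distrib]
    _ ≤ 12 * ∑ i, infDist (P i) C ^ 2 := by linarith
end

section
/- Let P = (p₁, …, pₙ) be a finite family of points in ℝ^d and let C¹, C² ⊆ ℝ^d be finite nonempty sets of centers. Set α = max_{c ∈ C²} dist(c, C¹). Then cost(C¹, P) ≤ cost(C², P) + n·α² + 2α·√(n · cost(C², P)). -/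
open Metric Finset

/-!
Moving from a point `p` to its nearest centre `c ∈ C₂`, and from `c` to `C₁`, gives the pointwise
bound `dist(p, C₁) ≤ dist(p, C₂) + α` (`infDist_le_infDist_add_of_forall_infDist_le`). Squaring and
summing over the `n` points produces the cross term `2α ∑ dist(pᵢ, C₂)`, and the Cauchy-Schwarz
inequality bounds that sum by `√(n · cost(C₂, P))`.
-/

/-- If every point of the finite set `t` is within distance `a` of `s`, then passing from `t` to `s`
increases the distance to a point by at most `a`. -/
lemma infDist_le_infDist_add_of_forall_infDist_le {X : Type*} [PseudoMetricSpace X]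
    {s : Set X} {t : Finset X} (ht : t.Nonempty) {a : ℝ} (h : ∀ c ∈ t, infDist c s ≤ a) (p : X) :
    infDist p s ≤ infDist p (t : Set X) + a := by
  obtain ⟨c, hc, hpc⟩ := t.finite_toSet.isCompact.exists_infDist_eq_dist ht p
  have h₁ : infDist p s ≤ infDist c s + dist p c := infDist_le_infDist_add_dist
  linarith [h c hc]

/-- Bound on the difference of `k`-means costs of two center sets in terms of their distance:
`cost(C¹, P) ≤ cost(C², P) + n·α² + 2α·√(n·cost(C², P))` where
`α = max_{c ∈ C²} dist(c, C¹)`. -/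
theorem kmeans_cost_center_move {d n : ℕ}
    (P : Fin n → EuclideanSpace ℝ (Fin d))
    (C₁ C₂ : Finset (EuclideanSpace ℝ (Fin d)))
    (h₁ : C₁.Nonempty) (h₂ : C₂.Nonempty)
    (α : ℝ)
    (hα : α = C₂.sup' h₂ fun c => infDist c (C₁ : Set (EuclideanSpace ℝ (Fin d)))) :
    ∑ i, infDist (P i) (C₁ : Set (EuclideanSpace ℝ (Fin d))) ^ 2 ≤
      (∑ i, infDist (P i) (C₂ : Set (EuclideanSpace ℝ (Fin d))) ^ 2) + n * α ^ 2 +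
        2 * α * Real.sqrt (n * ∑ i, infDist (P i) (C₂ : Set (EuclideanSpace ℝ (Fin d))) ^ 2) := by
  have hle : ∀ c ∈ C₂, infDist c (C₁ : Set (EuclideanSpace ℝ (Fin d))) ≤ α := fun c hc =>
    hα ▸ le_sup' (fun c => infDist c (C₁ : Set (EuclideanSpace ℝ (Fin d)))) hc
  have hα₀ : 0 ≤ α := by
    obtain ⟨c, hc⟩ := h₂
    exact infDist_nonneg.trans (hle c hc)
  have hCS : ∑ i, infDist (P i) (C₂ : Set (EuclideanSpace ℝ (Fin d))) ≤
      Real.sqrt (n * ∑ i, infDist (P i) (C₂ : Set (EuclideanSpace ℝ (Fin d))) ^ 2) := by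
    apply Real.le_sqrt_of_sq_le
    simpa using sq_sum_le_card_mul_sum_sq (s := univ)
      (f := fun i => infDist (P i) (C₂ : Set (EuclideanSpace ℝ (Fin d))))
  calc ∑ i, infDist (P i) (C₁ : Set (EuclideanSpace ℝ (Fin d))) ^ 2
      ≤ ∑ i, (infDist (P i) (C₂ : Set (EuclideanSpace ℝ (Fin d))) + α) ^ 2 :=
        sum_le_sum fun i _ => pow_le_pow_left₀ infDist_nonneg
          (infDist_le_infDist_add_of_forall_infDist_le h₂ hle (P i)) 2
    _ = (∑ i, infDist (P i) (C₂ : Set (EuclideanSpace ℝ (Fin d))) ^ 2) + n * α ^ 2 +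
          2 * α * ∑ i, infDist (P i) (C₂ : Set (EuclideanSpace ℝ (Fin d))) := by
        simp only [add_sq, sum_add_distrib, ← sum_mul, ← mul_sum, sum_const, card_univ,
          Fintype.card_fin, nsmul_eq_mul]
        ring
    _ ≤ _ := by gcongr
end

section
/- Let P = (p₁, …, pₙ) be a finite family of points in ℝ^d, let k ≥ 1, let C* = {c*₁, …, c*ₖ} ⊆ ℝ^d be a set of k centers and let C̃ ⊆ ℝ^d be a finite nonempty set of centers. Suppose σ : {1,…,n} → {1,…,k} is a nearest-center assignment for C*, i.e. ‖pᵢ − c*_{σ(i)}‖ = dist(pᵢ, C*) for every i, and suppose every j ∈ {1,…,k} satisfies |σ⁻¹(j)| ≥ f for some integer f ≥ 1. If cost_Med(C̃, P) ≤ 2·cost_Med(C*, P) (C̃ is a 2-approximate k-median solution), then max_{j ∈ [k]} dist(c*ⱼ, C̃) ≤ 6·cost_Med(C*, P)/f. -/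
/-!
For a point `p` of the cluster of `c*ⱼ`, the triangle inequality gives
`dist(c*ⱼ, C̃) ≤ dist(p, C̃) + ‖p - c*ⱼ‖ = dist(p, C̃) + dist(p, C*)`.
Summing over the at least `f` points of the cluster bounds `f · dist(c*ⱼ, C̃)` by
`cost(C̃) + cost(C*) ≤ 3 · cost(C*)`, which is even stronger than the claimed factor `6`.
-/

open Metric Finset

/-- `k`-median analogue of the center-closeness lemma: if every cluster of an optimal
`k`-median solution `C*` contains at least `f` points and `C̃` is a 2-approximate solution,
then every center of `C*` has a point of `C̃` within distance `6 · cost_Med(C*, P) / f`. -/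
theorem kmedian_centers_close {d n k : ℕ} (hk : 1 ≤ k)
    (P : Fin n → EuclideanSpace ℝ (Fin d))
    (cstar : Fin k → EuclideanSpace ℝ (Fin d))
    (Ct : Finset (EuclideanSpace ℝ (Fin d))) (hCt : Ct.Nonempty)
    (σ : Fin n → Fin k)
    (hσ : ∀ i, ‖P i - cstar (σ i)‖ = infDist (P i) (Set.range cstar))
    (f : ℕ) (hf : 1 ≤ f)
    (hcount : ∀ j : Fin k, f ≤ (Finset.univ.filter fun i => σ i = j).card)
    (happrox : ∑ i, infDist (P i) (Ct : Set (EuclideanSpace ℝ (Fin d))) ≤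
      2 * ∑ i, infDist (P i) (Set.range cstar)) :
    ∀ j : Fin k, infDist (cstar j) (Ct : Set (EuclideanSpace ℝ (Fin d))) ≤
      6 * (∑ i, infDist (P i) (Set.range cstar)) / f := by
  intro j
  have hf0 : (0 : ℝ) < f := by exact_mod_cast hf
  have hcost : 0 ≤ ∑ i, infDist (P i) (Set.range cstar) :=
    Finset.sum_nonneg fun _ _ => infDist_nonneg
  have hD : 0 ≤ infDist (cstar j) (Ct : Set (EuclideanSpace ℝ (Fin d))) := infDist_nonneg
  have hcard : (f : ℝ) ≤ ((Finset.univ.filter fun i => σ i = j).card : ℝ) := by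
    exact_mod_cast hcount j
  rw [le_div_iff₀ hf0]
  -- Averaging the triangle inequality over cluster `j` gives the constant `2 + 1 = 3`.
  have key : ((Finset.univ.filter fun i => σ i = j).card : ℝ) *
      infDist (cstar j) (Ct : Set (EuclideanSpace ℝ (Fin d))) ≤
      3 * ∑ i, infDist (P i) (Set.range cstar) := by
    calc _ = ∑ i ∈ Finset.univ.filter (fun i => σ i = j),
          infDist (cstar j) (Ct : Set (EuclideanSpace ℝ (Fin d))) := by simp
      _ ≤ ∑ i ∈ Finset.univ.filter (fun i => σ i = j),
          (infDist (P i) (Ct : Set (EuclideanSpace ℝ (Fin d))) +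
            infDist (P i) (Set.range cstar)) := by
        refine Finset.sum_le_sum fun i hi => ?_
        have hi' : σ i = j := by simpa using hi
        rw [← hσ i, hi', ← dist_eq_norm, dist_comm]
        exact infDist_le_infDist_add_dist
      _ ≤ ∑ i, (infDist (P i) (Ct : Set (EuclideanSpace ℝ (Fin d))) +
            infDist (P i) (Set.range cstar)) :=
        Finset.sum_le_sum_of_subset_of_nonneg (Finset.filter_subset _ _)
          fun _ _ _ => add_nonneg infDist_nonneg infDist_nonneg
      _ ≤ _ := by
        rw [Finset.sum_add_distrib]
        linarith
  have hmul := mul_le_mul_of_nonneg_right hcard hD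
  linarith
end

section
/- Let c ≥ 1, Δ ≥ 1 and 0 < ε₀ ≤ 1/2 be constants. There exists a constant K > 0, depending only on c, Δ and ε₀, such that the following holds. Let l ≥ 1 and for each i ∈ {1,…,l} let Aᵢ be a real nᵢ × d matrix with Frobenius norm ‖Aᵢ‖_F ≤ c·2^{i(Δ+1)}, and let Sᵢ be a real mᵢ × nᵢ matrix such that for all x ∈ ℝ^d, (1 − ε₀/i)·‖Aᵢx‖² ≤ ‖SᵢAᵢx‖² ≤ (1 + ε₀/i)·‖Aᵢx‖². Suppose F ≥ 2 is such that ∑_{i=1}^l ‖Aᵢx‖² ≥ F for every unit vector x ∈ ℝ^d. Then for every x ∈ ℝ^d, |∑_{i=1}^l ‖SᵢAᵢx‖² − ∑_{i=1}^l ‖Aᵢx‖²| ≤ (K/log F) · ∑_{i=1}^l ‖Aᵢx‖². (This is the deterministic core of the paper's lemma that the block-diagonal sketch S = diag(S₁,…,S_l) applied to the vertically concatenated matrix A is a subspace embedding with error ε = O(1/log F), where F is a lower bound on the square σ_d² of the smallest singular value of A.) -/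
open Finset

/-!
Write `aᵢ = ‖Aᵢx‖²`, `T = ∑ aᵢ`, `L = log F`. The embedding hypotheses bound the error by
`∑ (ε₀/i) aᵢ`, so the task is to show `∑ aᵢ/i = O(T/L)`. Blocks with `i > t := L/(6(Δ+1))`
contribute at most `T/t`. Blocks with `i ≤ t` are negligible: by Cauchy–Schwarz and the Frobenius
bound (`mulVec_sq_le`),
`aᵢ ≤ c² 2^{2i(Δ+1)} ‖x‖² ≤ c² 2^{-i} 2^{3i(Δ+1)} ‖x‖² ≤ c² 2^{-i} √F ‖x‖²`, and the factor
`2^{-i}` makes these bounds sum to at most `c² √F ‖x‖²`. Homogeneity turns the singular value bound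
into `F ‖x‖² ≤ T` (`lower_bound_scaled`), hence `√F ‖x‖² ≤ T/√F`, and `1/√F ≤ 4/L`.
-/

lemma mulVec_sq_le {n d : ℕ} (A : Matrix (Fin n) (Fin d) ℝ) (x : Fin d → ℝ) :
    ∑ r, (A.mulVec x r) ^ 2 ≤ (∑ r, ∑ j, (A r j) ^ 2) * ∑ j, (x j) ^ 2 := by
  rw [Finset.sum_mul]
  exact Finset.sum_le_sum fun r _ =>
    Finset.sum_mul_sq_le_sq_mul_sq Finset.univ (fun j => A r j) x

lemma lower_bound_scaled {l d : ℕ} {n : Fin l → ℕ}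
    (A : (i : Fin l) → Matrix (Fin (n i)) (Fin d) ℝ) (F : ℝ)
    (h : ∀ x : Fin d → ℝ, ∑ j, (x j) ^ 2 = 1 → F ≤ ∑ i, ∑ r, ((A i).mulVec x r) ^ 2)
    (x : Fin d → ℝ) :
    F * ∑ j, (x j) ^ 2 ≤ ∑ i, ∑ r, ((A i).mulVec x r) ^ 2 := by
  have hN : 0 ≤ ∑ j, (x j) ^ 2 := Finset.sum_nonneg fun _ _ => sq_nonneg _
  rcases hN.eq_or_lt with h0 | hpos
  · rw [← h0, mul_zero]
    positivity
  · set N := ∑ j, (x j) ^ 2 with hNdef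
    have hs : (Real.sqrt N)⁻¹ ^ 2 = N⁻¹ := by rw [inv_pow, Real.sq_sqrt hN]
    have hu := h ((Real.sqrt N)⁻¹ • x) (by
      simp only [Pi.smul_apply, smul_eq_mul, mul_pow, ← Finset.mul_sum, hs]
      rw [← hNdef, inv_mul_cancel₀ hpos.ne'])
    simp only [Matrix.mulVec_smul, Pi.smul_apply, smul_eq_mul, mul_pow, ← Finset.mul_sum, hs] at hu
    rwa [inv_mul_eq_div, le_div_iff₀ hpos] at hu

lemma sum_half_pow_le_one (l : ℕ) : ∑ i : Fin l, (1 / 2 : ℝ) ^ ((i : ℕ) + 1) ≤ 1 := by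
  rw [Fin.sum_univ_eq_sum_range (fun i : ℕ => (1 / 2 : ℝ) ^ (i + 1))]
  have h : ∀ k : ℕ, ∑ i ∈ Finset.range k, (1 / 2 : ℝ) ^ (i + 1) = 1 - (1 / 2) ^ k := by
    intro k
    induction k with
    | zero => simp
    | succ k ih => rw [Finset.sum_range_succ, ih]; ring
  rw [h]
  have : (0 : ℝ) ≤ (1 / 2) ^ l := by positivity
  linarith

lemma logb_two_le_four_mul_sqrt {F : ℝ} (hF : 0 < F) : Real.logb 2 F ≤ 4 * Real.sqrt F := by
  have hlog := Real.log_le_sub_one_of_pos (Real.sqrt_pos.2 hF)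
  rw [Real.log_sqrt hF.le] at hlog
  have hl2 := Real.log_two_gt_d9
  have hs := Real.sqrt_nonneg F
  rw [Real.logb, div_le_iff₀ (by linarith)]
  nlinarith

/-- The dichotomy for a single block: either `1/k ≤ 1/t` with `t = log F / (6(Δ+1))`, or `k ≤ t`
and the block is bounded by the summable quantity `c² √F N 2^{-k}`. -/
lemma block_bound {c Δ F a N : ℝ} (hΔ : 1 ≤ Δ) (hF : 2 ≤ F) (ha : 0 ≤ a) (hN : 0 ≤ N)
    (k : ℕ) (hk : 1 ≤ k) (h : a ≤ (c * (2 : ℝ) ^ ((k : ℝ) * (Δ + 1))) ^ 2 * N) :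
    a / k ≤ 6 * (Δ + 1) / Real.logb 2 F * a + c ^ 2 * Real.sqrt F * N * (1 / 2) ^ k := by
  have hk' : (1 : ℝ) ≤ k := by exact_mod_cast hk
  have hL : 0 < Real.logb 2 F := Real.logb_pos (by norm_num) (by linarith)
  rcases le_total (Real.logb 2 F) (6 * (Δ + 1) * k) with hbig | hsmall
  · have h1 : a / k ≤ 6 * (Δ + 1) / Real.logb 2 F * a := by
      rw [div_mul_eq_mul_div, div_le_div_iff₀ (by linarith) hL]
      nlinarith
    have : 0 ≤ c ^ 2 * Real.sqrt F * N * (1 / 2) ^ k := by positivity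
    linarith
  · have hpow : ((2 : ℝ) ^ ((k : ℝ) * (Δ + 1))) ^ 2 ≤ Real.sqrt F * (1 / 2) ^ k := by
      have e1 : ((2 : ℝ) ^ ((k : ℝ) * (Δ + 1))) ^ 2 = (2 : ℝ) ^ ((k : ℝ) * (Δ + 1) * 2) := by
        rw [Real.rpow_mul (by norm_num) _ 2]; norm_num
      have e2 : Real.sqrt F = (2 : ℝ) ^ (Real.logb 2 F * (1 / 2)) := by
        rw [Real.rpow_mul (by norm_num), Real.rpow_logb (by norm_num) (by norm_num) (by linarith),
          Real.sqrt_eq_rpow]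
      have e3 : ((1 : ℝ) / 2) ^ k = (2 : ℝ) ^ (-(k : ℝ)) := by
        rw [Real.rpow_neg (by norm_num), Real.rpow_natCast, one_div, inv_pow]
      rw [e1, e2, e3, ← Real.rpow_add (by norm_num)]
      apply Real.rpow_le_rpow_of_exponent_le (by norm_num)
      nlinarith
    have h1 : a / k ≤ a := div_le_self ha hk'
    have h2 : (c * (2 : ℝ) ^ ((k : ℝ) * (Δ + 1))) ^ 2 * N ≤
        c ^ 2 * Real.sqrt F * N * (1 / 2) ^ k := by
      calc (c * (2 : ℝ) ^ ((k : ℝ) * (Δ + 1))) ^ 2 * N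
          = c ^ 2 * N * ((2 : ℝ) ^ ((k : ℝ) * (Δ + 1))) ^ 2 := by ring
        _ ≤ c ^ 2 * N * (Real.sqrt F * (1 / 2) ^ k) := by gcongr
        _ = _ := by ring
    have : 0 ≤ 6 * (Δ + 1) / Real.logb 2 F * a := by positivity
    linarith

/-- Deterministic core of the improving subspace embedding lemma: block `i` is sketched with
precision `ε₀/i`, the Frobenius norm of block `i` is at most `c · 2^{i(Δ+1)}`, and
`F ≤ σ_d² = min_{‖x‖=1} ∑ᵢ ‖Aᵢx‖²`; then the block-diagonal sketch has relative error
`K / log F`. -/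
theorem improving_subspace_embedding
    (c Δ ε₀ : ℝ) (hc : 1 ≤ c) (hΔ : 1 ≤ Δ) (hε₀ : 0 < ε₀) (hε₀' : ε₀ ≤ 1 / 2) :
    ∃ K : ℝ, 0 < K ∧
      ∀ (l d : ℕ), 1 ≤ l →
      ∀ (n m : Fin l → ℕ)
        (A : (i : Fin l) → Matrix (Fin (n i)) (Fin d) ℝ)
        (S : (i : Fin l) → Matrix (Fin (m i)) (Fin (n i)) ℝ),
        -- Frobenius norm bound on the blocks
        (∀ i : Fin l,
          Real.sqrt (∑ r, ∑ j, (A i r j) ^ 2) ≤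
            c * (2 : ℝ) ^ ((((i : ℕ) : ℝ) + 1) * (Δ + 1))) →
        -- each Sᵢ is a (1 ± ε₀/i)-subspace embedding for Aᵢ
        (∀ (i : Fin l) (x : Fin d → ℝ),
          (1 - ε₀ / ((i : ℕ) + 1)) * ∑ r, ((A i).mulVec x r) ^ 2 ≤
              ∑ r, ((S i).mulVec ((A i).mulVec x) r) ^ 2 ∧
            ∑ r, ((S i).mulVec ((A i).mulVec x) r) ^ 2 ≤
              (1 + ε₀ / ((i : ℕ) + 1)) * ∑ r, ((A i).mulVec x r) ^ 2) →
      ∀ F : ℝ, 2 ≤ F →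
        -- lower bound on the squared smallest singular value of A
        (∀ x : Fin d → ℝ, ∑ j, (x j) ^ 2 = 1 → F ≤ ∑ i, ∑ r, ((A i).mulVec x r) ^ 2) →
        ∀ x : Fin d → ℝ,
          |(∑ i, ∑ r, ((S i).mulVec ((A i).mulVec x) r) ^ 2) -
              ∑ i, ∑ r, ((A i).mulVec x r) ^ 2| ≤
            K / Real.logb 2 F * ∑ i, ∑ r, ((A i).mulVec x r) ^ 2 := by
  refine ⟨ε₀ * (6 * (Δ + 1) + 4 * c ^ 2), by positivity, ?_⟩
  intro l d _ n m A S hA hS F hF hlow x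
  set a : Fin l → ℝ := fun i => ∑ r, ((A i).mulVec x r) ^ 2 with ha_def
  set N := ∑ j, (x j) ^ 2 with hN_def
  set L := Real.logb 2 F with hL_def
  have ha : ∀ i, 0 ≤ a i := fun i => Finset.sum_nonneg fun _ _ => sq_nonneg _
  have hN : 0 ≤ N := Finset.sum_nonneg fun _ _ => sq_nonneg _
  have hL : 0 < L := Real.logb_pos (by norm_num) (by linarith)
  have hT : F * N ≤ ∑ i, a i := lower_bound_scaled A F hlow x
  have hblock : ∀ i : Fin l, a i / ((i : ℕ) + 1) ≤
      6 * (Δ + 1) / L * a i + c ^ 2 * Real.sqrt F * N * (1 / 2) ^ ((i : ℕ) + 1) := by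
    intro i
    have h1 : a i ≤ (c * (2 : ℝ) ^ ((((i : ℕ) + 1 : ℕ) : ℝ) * (Δ + 1))) ^ 2 * N := by
      refine (mulVec_sq_le (A i) x).trans (mul_le_mul_of_nonneg_right ?_ hN)
      have := (Real.sqrt_le_iff.1 (hA i)).2
      push_cast
      exact this
    have := block_bound hΔ hF (ha i) hN ((i : ℕ) + 1) (by omega) h1
    push_cast at this
    exact this
  have hsmall : Real.sqrt F * N ≤ 4 / L * ∑ i, a i := by
    have hs : Real.sqrt F * Real.sqrt F = F := Real.mul_self_sqrt (by linarith)
    have hs0 := Real.sqrt_nonneg F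
    rw [div_mul_eq_mul_div, le_div_iff₀ hL]
    calc Real.sqrt F * N * L ≤ Real.sqrt F * N * (4 * Real.sqrt F) := by
          gcongr
          exact logb_two_le_four_mul_sqrt (by linarith)
      _ = 4 * (Real.sqrt F * Real.sqrt F * N) := by ring
      _ = 4 * (F * N) := by rw [hs]
      _ ≤ 4 * ∑ i, a i := by gcongr
  calc |(∑ i, ∑ r, ((S i).mulVec ((A i).mulVec x) r) ^ 2) - ∑ i, a i|
      ≤ ∑ i, |(∑ r, ((S i).mulVec ((A i).mulVec x) r) ^ 2) - a i| := by
        rw [← Finset.sum_sub_distrib]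
        exact Finset.abs_sum_le_sum_abs _ _
    _ ≤ ∑ i : Fin l, ε₀ * (a i / ((i : ℕ) + 1)) := by
        refine Finset.sum_le_sum fun i _ => ?_
        obtain ⟨h1, h2⟩ := hS i x
        change (1 - ε₀ / ((i : ℕ) + 1)) * a i ≤ _ at h1
        change _ ≤ (1 + ε₀ / ((i : ℕ) + 1)) * a i at h2
        have e : ε₀ * (a i / ((i : ℕ) + 1)) = ε₀ / ((i : ℕ) + 1) * a i := by ring
        rw [e, abs_le]
        constructor <;> linarith
    _ ≤ ∑ i : Fin l, ε₀ * (6 * (Δ + 1) / L * a i +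
          c ^ 2 * Real.sqrt F * N * (1 / 2) ^ ((i : ℕ) + 1)) := by
        gcongr with i
        exact hblock i
    _ = ε₀ * (6 * (Δ + 1) / L * ∑ i, a i + c ^ 2 * (Real.sqrt F * N) *
          ∑ i : Fin l, (1 / 2 : ℝ) ^ ((i : ℕ) + 1)) := by
        rw [← Finset.mul_sum, Finset.sum_add_distrib, ← Finset.mul_sum, ← Finset.mul_sum]
        ring
    _ ≤ ε₀ * (6 * (Δ + 1) / L * ∑ i, a i + c ^ 2 * (4 / L * ∑ i, a i) * 1) := by
        have := Finset.sum_nonneg fun i (_ : i ∈ Finset.univ) => ha i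
        gcongr
        exact sum_half_pow_le_one l
    _ = ε₀ * (6 * (Δ + 1) + 4 * c ^ 2) / L * ∑ i, a i := by ring
end

section
/- Let α > 0, c ≥ 1, Δ ≥ 1 and 0 < ε₀ ≤ 1/2 be constants. There exists a constant K > 0, depending only on α, c, Δ and ε₀, such that the following holds. Let l ≥ 1 and for i ∈ {1,…,l} let Aᵢ be a real nᵢ × d matrix with nᵢ = 2^i, Bᵢ a real nᵢ × d' matrix, and Sᵢ a real mᵢ × nᵢ matrix satisfying ‖AᵢᵀSᵢᵀSᵢBᵢ − AᵢᵀBᵢ‖_F ≤ (ε₀/i)^α · ‖Aᵢ‖_F·‖Bᵢ‖_F. Let A and B be the vertical concatenations of the Aᵢ and Bᵢ respectively, and suppose ‖A‖_F > 0. Suppose F ≥ 2 is such that for every j ∈ {1,…,l}, the submatrix A_{(≤j)} formed by the blocks A₁, …, Aⱼ satisfies ‖A_{(≤j)}‖_F / ‖A‖_F ≤ c·(∑_{i=1}^{j} nᵢ)^Δ / F. Then ‖∑_{i=1}^l AᵢᵀSᵢᵀSᵢBᵢ − AᵀB‖_F ≤ 2·(K/log F)^α · ‖A‖_F·‖B‖_F.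 (This is the deterministic core of the paper's lemma on matrix multiplication with improving precision: ∑ᵢ AᵢᵀSᵢᵀSᵢBᵢ = AᵀSᵀSB for the block-diagonal sketch S = diag(S₁,…,S_l).) -/
open Finset Matrix

/-!
By the triangle inequality the total error is at most `∑ᵢ (ε₀/i)^α ‖Aᵢ‖ ‖Bᵢ‖`. Write `L = log₂ F`
and cut this sum near `i = L / (2Δ)`; here `i ≥ 1`, whereas the Lean index is `i - 1`.

* Blocks with `(i + 1) Δ ≤ L / 2`: bound the factor `(ε₀/i)^α` by `1`. Cauchy–Schwarz and the
  hypothesis on prefixes bound their contribution by `c · 2^(L/2) / F = c · F^(-1/2)` times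
  `‖A‖ ‖B‖`, and `F^(-1/2)` decays faster than any power of `1 / L`
  (`const_mul_rpow_neg_half_le`).
* The remaining blocks have `i ≥ L / (4Δ)`, so `(ε₀/i)^α ≤ (2Δ/L)^α`, and Cauchy–Schwarz bounds
  their contribution by `(2Δ/L)^α ‖A‖ ‖B‖`.

Each part is thus at most `(K/L)^α ‖A‖ ‖B‖` for `K = 2Δ + c^(1/α) · 2α / log 2`, which accounts
for the factor `2`. The cut is carried out in `sum_weighted_le`, which concerns only the squared
block norms.
-/

/-- Triangle inequality for the Frobenius norm, in coordinates. -/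
lemma sqrt_sum_sq_sum_le {ι : Type*} (s : Finset ι) {d d' : ℕ}
    (M : ι → Matrix (Fin d) (Fin d') ℝ) :
    Real.sqrt (∑ r, ∑ j, ((∑ i ∈ s, M i) r j) ^ 2) ≤
      ∑ i ∈ s, Real.sqrt (∑ r, ∑ j, (M i r j) ^ 2) := by
  let _ := Matrix.frobeniusNormedAddCommGroup (m := Fin d) (n := Fin d') (α := ℝ)
  have key : ∀ N : Matrix (Fin d) (Fin d') ℝ,
      Real.sqrt (∑ r, ∑ j, (N r j) ^ 2) = ‖N‖ := by
    intro N
    rw [Matrix.frobenius_norm_def, Real.sqrt_eq_rpow]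
    simp
  simp only [key]
  exact norm_sum_le _ _

lemma sum_filter_two_pow_le {l : ℕ} (j0 : Fin l) :
    ∑ i ∈ Finset.univ.filter (fun i : Fin l => i ≤ j0), (2 : ℝ) ^ (i.val + 1) ≤
      2 ^ (j0.val + 2) := by
  have h1 : ∑ i ∈ Finset.univ.filter (fun i : Fin l => i ≤ j0), (2 : ℝ) ^ (i.val + 1) =
      ∑ k ∈ (Finset.univ.filter (fun i : Fin l => i ≤ j0)).image Fin.val, (2 : ℝ) ^ (k + 1) := by
    rw [Finset.sum_image]
    intro a _ b _ h
    exact Fin.ext h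
  have h2 : ∀ n : ℕ, ∑ k ∈ Finset.range n, (2 : ℝ) ^ (k + 1) ≤ 2 ^ (n + 1) := by
    intro n
    induction n with
    | zero => simp
    | succ n ih => rw [Finset.sum_range_succ]; rw [pow_succ 2 (n + 1)]; linarith
  rw [h1]
  refine le_trans (Finset.sum_le_sum_of_subset_of_nonneg ?_ fun _ _ _ => by positivity)
    (h2 (j0.val + 1))
  intro k hk
  simp only [Finset.mem_image, Finset.mem_filter, Finset.mem_univ, true_and] at hk
  obtain ⟨i, hi, rfl⟩ := hk
  have : i.val ≤ j0.val := hi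
  simp only [Finset.mem_range]
  omega

/-- Since `log F ≤ F^ε / ε` with `ε = 1 / (2α)`, the power `F^(-1/2)` is absorbed by
`(K / log₂ F)^α` once `K` is large enough. -/
lemma const_mul_rpow_neg_half_le {α c K F : ℝ} (hα : 0 < α) (hc : 1 ≤ c) (hF : 2 ≤ F)
    (hK : c ^ (1 / α) * (2 * α / Real.log 2) ≤ K) :
    c * F ^ (-(1 / 2) : ℝ) ≤ (K / Real.logb 2 F) ^ α := by
  have hF0 : 0 < F := by linarith
  have hL : 0 < Real.logb 2 F := Real.logb_pos (by norm_num) (by linarith)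
  have hlog2 : 0 < Real.log 2 := Real.log_pos (by norm_num)
  have hc0 : 0 < c := by linarith
  have h1 : Real.logb 2 F ≤ (2 * α / Real.log 2) * F ^ (1 / (2 * α)) := by
    have h := Real.log_le_rpow_div hF0.le (ε := 1 / (2 * α)) (by positivity)
    rw [Real.logb, div_le_iff₀ hlog2]
    refine h.trans (le_of_eq ?_)
    field_simp
  have h2 : c ^ (1 / α) * F ^ (-(1 / (2 * α))) ≤ K / Real.logb 2 F := by
    rw [le_div_iff₀ hL]
    calc c ^ (1 / α) * F ^ (-(1 / (2 * α))) * Real.logb 2 F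
        ≤ c ^ (1 / α) * F ^ (-(1 / (2 * α))) * ((2 * α / Real.log 2) * F ^ (1 / (2 * α))) := by
          gcongr
      _ = c ^ (1 / α) * (2 * α / Real.log 2) := by
          rw [Real.rpow_neg hF0.le]
          have : 0 < F ^ (1 / (2 * α)) := by positivity
          field_simp
      _ ≤ K := hK
  have h3 : (c ^ (1 / α) * F ^ (-(1 / (2 * α)))) ^ α = c * F ^ (-(1 / 2) : ℝ) := by
    rw [Real.mul_rpow (by positivity) (by positivity), ← Real.rpow_mul hc0.le,
      ← Real.rpow_mul hF0.le]
    congr 2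
    · rw [one_div_mul_cancel hα.ne', Real.rpow_one]
    · field_simp
  rw [← h3]
  exact Real.rpow_le_rpow (by positivity) h2 hα.le

/-- The scalar form of the theorem: `q i` and `p i` play the roles of the squared Frobenius norms
of the blocks of `A` and `B`. -/
lemma sum_weighted_le {α c Δ ε₀ K F : ℝ} (hα : 0 < α) (hc : 1 ≤ c) (hΔ : 1 ≤ Δ)
    (hε₀ : 0 < ε₀) (hε₀' : ε₀ ≤ 1 / 2) (hF : 2 ≤ F)
    (hK1 : c ^ (1 / α) * (2 * α / Real.log 2) ≤ K) (hK2 : 2 * Δ ≤ K)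
    {l : ℕ} (q p : Fin l → ℝ) (hq : ∀ i, 0 ≤ q i) (hp : ∀ i, 0 ≤ p i)
    (hA : 0 < Real.sqrt (∑ i, q i))
    (hpre : ∀ j0 : Fin l,
      Real.sqrt (∑ i ∈ Finset.univ.filter (fun i => i ≤ j0), q i) / Real.sqrt (∑ i, q i) ≤
        c * ((∑ i ∈ Finset.univ.filter (fun i => i ≤ j0), (2 : ℝ) ^ (i.val + 1)) ^ Δ) / F) :
    ∑ i : Fin l, (ε₀ / ((i : ℕ) + 1)) ^ α * Real.sqrt (q i) * Real.sqrt (p i) ≤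
      2 * (K / Real.logb 2 F) ^ α * Real.sqrt (∑ i, q i) * Real.sqrt (∑ i, p i) := by
  classical
  have hF0 : 0 < F := by linarith
  set L := Real.logb 2 F with hLdef
  have hL : 0 < L := Real.logb_pos (by norm_num) (by linarith)
  have hFL : (2 : ℝ) ^ L = F := Real.rpow_logb (by norm_num) (by norm_num) hF0
  have hK0 : 0 < K := by linarith
  -- Cauchy–Schwarz on a set of blocks
  have cs : ∀ s t : Finset (Fin l), s ⊆ t →
      ∑ i ∈ s, Real.sqrt (q i) * Real.sqrt (p i) ≤
        Real.sqrt (∑ i ∈ t, q i) * Real.sqrt (∑ i, p i) := by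
    intro s t hst
    refine (Real.sum_sqrt_mul_sqrt_le s hq hp).trans ?_
    gcongr
    · exact fun i _ _ => hq i
    · exact fun i _ _ => hp i
    · exact Finset.subset_univ s
  have hsmall : ∑ i ∈ Finset.univ.filter (fun i : Fin l => ((i : ℝ) + 2) * Δ ≤ L / 2),
      (ε₀ / ((i : ℕ) + 1)) ^ α * Real.sqrt (q i) * Real.sqrt (p i) ≤
      (K / L) ^ α * Real.sqrt (∑ i, q i) * Real.sqrt (∑ i, p i) := by
    set s := Finset.univ.filter (fun i : Fin l => ((i : ℝ) + 2) * Δ ≤ L / 2) with hs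
    rcases s.eq_empty_or_nonempty with he | hne
    · rw [he, Finset.sum_empty]; positivity
    · set j0 := s.max' hne
      have hj0 : ((j0 : ℝ) + 2) * Δ ≤ L / 2 :=
        (Finset.mem_filter.mp (s.max'_mem hne)).2
      have hsub : s ⊆ Finset.univ.filter (fun i => i ≤ j0) := fun i hi => by
        simpa using s.le_max' i hi
      have h1 : ∑ i ∈ s, (ε₀ / ((i : ℕ) + 1)) ^ α * Real.sqrt (q i) * Real.sqrt (p i) ≤
          ∑ i ∈ s, Real.sqrt (q i) * Real.sqrt (p i) := by
        refine Finset.sum_le_sum fun i _ => ?_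
        have : (ε₀ / ((i : ℕ) + 1)) ^ α ≤ 1 := by
          refine Real.rpow_le_one (by positivity) ?_ hα.le
          rw [div_le_one (by positivity)]
          have : (0 : ℝ) ≤ (i : ℕ) := by positivity
          linarith
        rw [mul_assoc]
        exact mul_le_of_le_one_left (by positivity) this
      have h2 : (∑ i ∈ Finset.univ.filter (fun i => i ≤ j0), (2 : ℝ) ^ (i.val + 1)) ^ Δ ≤
          F ^ (1 / 2 : ℝ) := by
        calc (∑ i ∈ Finset.univ.filter (fun i => i ≤ j0), (2 : ℝ) ^ (i.val + 1)) ^ Δ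
            ≤ ((2 : ℝ) ^ (j0.val + 2)) ^ Δ :=
              Real.rpow_le_rpow (by positivity) (sum_filter_two_pow_le j0) (by linarith)
          _ = (2 : ℝ) ^ (((j0 : ℝ) + 2) * Δ) := by
              rw [← Real.rpow_natCast, ← Real.rpow_mul (by norm_num)]
              push_cast
              rfl
          _ ≤ (2 : ℝ) ^ (L * (1 / 2)) :=
              Real.rpow_le_rpow_of_exponent_le (by norm_num) (by linarith)
          _ = F ^ (1 / 2 : ℝ) := by rw [Real.rpow_mul (by norm_num), hFL]
      have h3 : c * (∑ i ∈ Finset.univ.filter (fun i => i ≤ j0), (2 : ℝ) ^ (i.val + 1)) ^ Δ / F ≤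
          (K / L) ^ α := by
        refine le_trans ?_ (const_mul_rpow_neg_half_le hα hc hF hK1)
        have : F ^ (-(1 / 2) : ℝ) = F ^ (1 / 2 : ℝ) / F := by
          rw [← Real.rpow_sub_one hF0.ne']; norm_num
        rw [this, ← mul_div_assoc]
        gcongr
      have h4 := (div_le_iff₀ hA).mp ((hpre j0).trans h3)
      exact (h1.trans (cs s _ hsub)).trans (by gcongr)
  have hbig : ∑ i ∈ Finset.univ.filter (fun i : Fin l => ¬ ((i : ℝ) + 2) * Δ ≤ L / 2),
      (ε₀ / ((i : ℕ) + 1)) ^ α * Real.sqrt (q i) * Real.sqrt (p i) ≤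
      (K / L) ^ α * Real.sqrt (∑ i, q i) * Real.sqrt (∑ i, p i) := by
    rw [mul_assoc]
    refine le_trans ?_ (mul_le_mul_of_nonneg_left (cs
      (Finset.univ.filter fun i : Fin l => ¬ ((i : ℝ) + 2) * Δ ≤ L / 2) _ (Finset.subset_univ _))
      (by positivity : 0 ≤ (K / L) ^ α))
    rw [Finset.mul_sum]
    refine Finset.sum_le_sum fun i hi => ?_
    have hi' : L / 2 < ((i : ℝ) + 2) * Δ := not_le.mp (Finset.mem_filter.mp hi).2
    have hi0 : (0 : ℝ) ≤ (i : ℕ) := by positivity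
    have : ε₀ / ((i : ℕ) + 1) ≤ K / L := by
      rw [div_le_div_iff₀ (by positivity) hL]
      -- `L / 2 < (i + 2) Δ ≤ 2 (i + 1) Δ` for the zero-based index `i`
      have h5 : L ≤ 4 * Δ * ((i : ℕ) + 1) := by nlinarith
      calc ε₀ * L ≤ 1 / 2 * (4 * Δ * ((i : ℕ) + 1)) := by gcongr
        _ = 2 * Δ * ((i : ℕ) + 1) := by ring
        _ ≤ K * ((i : ℕ) + 1) := by gcongr
    rw [mul_assoc]
    gcongr
  rw [← Finset.sum_filter_add_sum_filter_not Finset.univ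
    (fun i : Fin l => ((i : ℝ) + 2) * Δ ≤ L / 2)]
  linarith

/-- Deterministic core of the improving matrix multiplication lemma: block `i` (of `2^i` rows)
is sketched with error `(ε₀/i)^α`, the Frobenius mass of `A` is not concentrated on prefixes
(controlled via `F`), and then the block-diagonal sketch multiplies `A` and `B` with relative
error `2·(K/log F)^α`. -/
theorem improving_matrix_multiplication
    (α c Δ ε₀ : ℝ) (hα : 0 < α) (hc : 1 ≤ c) (hΔ : 1 ≤ Δ)
    (hε₀ : 0 < ε₀) (hε₀' : ε₀ ≤ 1 / 2) :
    ∃ K : ℝ, 0 < K ∧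
      ∀ (l d d' : ℕ), 1 ≤ l →
      ∀ (m : Fin l → ℕ)
        (A : (i : Fin l) → Matrix (Fin (2 ^ (i.val + 1))) (Fin d) ℝ)
        (B : (i : Fin l) → Matrix (Fin (2 ^ (i.val + 1))) (Fin d') ℝ)
        (S : (i : Fin l) → Matrix (Fin (m i)) (Fin (2 ^ (i.val + 1))) ℝ),
        -- each block sketch multiplies Aᵢ and Bᵢ with error (ε₀/i)^α
        (∀ i : Fin l,
          Real.sqrt (∑ r, ∑ j, (((A i)ᵀ * (S i)ᵀ * S i * B i - (A i)ᵀ * B i) r j) ^ 2) ≤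
            (ε₀ / ((i : ℕ) + 1)) ^ α *
              Real.sqrt (∑ r, ∑ j, (A i r j) ^ 2) * Real.sqrt (∑ r, ∑ j, (B i r j) ^ 2)) →
        0 < Real.sqrt (∑ i, ∑ r, ∑ j, (A i r j) ^ 2) →
      ∀ F : ℝ, 2 ≤ F →
        -- the Frobenius norm of A is not concentrated on prefixes of blocks
        (∀ j0 : Fin l,
          Real.sqrt (∑ i ∈ Finset.univ.filter (fun i => i ≤ j0), ∑ r, ∑ j, (A i r j) ^ 2) /
              Real.sqrt (∑ i, ∑ r, ∑ j, (A i r j) ^ 2) ≤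
            c * ((∑ i ∈ Finset.univ.filter (fun i => i ≤ j0), (2 : ℝ) ^ (i.val + 1)) ^ Δ) / F) →
        Real.sqrt (∑ r, ∑ j,
            (((∑ i, ((A i)ᵀ * (S i)ᵀ * S i * B i)) - ∑ i, ((A i)ᵀ * B i)) r j) ^ 2) ≤
          2 * (K / Real.logb 2 F) ^ α *
            Real.sqrt (∑ i, ∑ r, ∑ j, (A i r j) ^ 2) *
            Real.sqrt (∑ i, ∑ r, ∑ j, (B i r j) ^ 2) := by
  have hlog2 : 0 < Real.log 2 := Real.log_pos (by norm_num)
  have hc0 : 0 < c := by linarith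
  have hpos : 0 < c ^ (1 / α) * (2 * α / Real.log 2) := by positivity
  refine ⟨2 * Δ + c ^ (1 / α) * (2 * α / Real.log 2), by positivity, ?_⟩
  intro l d d' _ m A B S hS hA F hF hpre
  rw [← Finset.sum_sub_distrib]
  refine (sqrt_sum_sq_sum_le _ _).trans ((Finset.sum_le_sum fun i _ => hS i).trans ?_)
  exact sum_weighted_le hα hc hΔ hε₀ hε₀' hF (by linarith) (by linarith) _ _
    (fun i => by positivity) (fun i => by positivity) hA hpre
end

section
/- Let c ≥ 1 and Δ ≥ 1 be constants. There exists a constant C > 0, depending only on c and Δ, such that the following holds: for every sequence (aᵢ)_{i≥1} of nonnegative reals with aᵢ ≤ c·2^{iΔ} for all i, and every l ≥ 1 and real f ≥ 2 with f ≥ ∑_{i=1}^l aᵢ, one has (∑_{i=1}^l aᵢ/i) / f ≤ C / log f. Consequently, if f = f(l) → ∞ as l → ∞ (with f(l) ≥ ∑_{i=1}^l aᵢ for every l), then ε_l = (∑_{i=1}^l aᵢ/i)/f(l) → 0 and ε_l = O(1/log f(l)). -/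
/-!
Write `L = log₂ f` and split the sum at `t = L / (2Δ)`. Terms with `i > t` satisfy
`aᵢ / i ≤ (2Δ / L) aᵢ`, so together they contribute at most `2Δ f / L`. Each term with `i ≤ t` is
at most `c · 2 ^ (L / 2) = c √f`, and there are at most `t ≤ L / 2` of them, so together they
contribute at most `c L √f / 2`; this is `O(f / L)` because `L ^ 2 ≤ 64 √f`. The bound
`C / log₂ f` then gives the limit by squeezing.
-/

open Finset Filter

/-- The growth comparison `log₂ f = O(f ^ (1/4))`, squared. -/
lemma logb_sq_le {f : ℝ} (hf : 2 ≤ f) : Real.logb 2 f ^ 2 ≤ 64 * f ^ (1 / 2 : ℝ) := by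
  have hf0 : 0 ≤ f := by linarith
  have h1 := Real.log_le_rpow_div hf0 (show (0 : ℝ) < 1 / 4 by norm_num)
  have h2 := Real.log_two_gt_d9
  have hp : 0 ≤ f ^ (1 / 4 : ℝ) := by positivity
  have h0 : 0 ≤ Real.logb 2 f := Real.logb_nonneg (by norm_num) (by linarith)
  have h3 : Real.logb 2 f ≤ 8 * f ^ (1 / 4 : ℝ) := by
    rw [Real.logb, div_le_iff₀ (by linarith)]
    nlinarith
  have h4 : f ^ (1 / 2 : ℝ) = f ^ (1 / 4 : ℝ) * f ^ (1 / 4 : ℝ) := by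
    rw [← Real.rpow_add (by linarith)]; norm_num
  rw [h4]
  nlinarith

/-- The quantitative bound, with the explicit constant `C = 32 c + 2 Δ`. -/
lemma weighted_sum_div_le {c Δ : ℝ} (hc : 1 ≤ c) (hΔ : 1 ≤ Δ) {a : ℕ → ℝ}
    (ha0 : ∀ i, 1 ≤ i → 0 ≤ a i)
    (ha : ∀ i : ℕ, 1 ≤ i → a i ≤ c * (2 : ℝ) ^ ((i : ℝ) * Δ)) (l : ℕ) {f : ℝ} (hf : 2 ≤ f)
    (hs : (∑ i ∈ Finset.Icc 1 l, a i) ≤ f) :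
    (∑ i ∈ Finset.Icc 1 l, a i / i) / f ≤ (32 * c + 2 * Δ) / Real.logb 2 f := by
  have hf0 : 0 < f := by linarith
  have hL : 0 < Real.logb 2 f := Real.logb_pos (by norm_num) (by linarith)
  have hsq := logb_sq_le hf
  have hfL : f = (2 : ℝ) ^ Real.logb 2 f :=
    (Real.rpow_logb (by norm_num) (by norm_num) hf0).symm
  have hr : f ^ (1 / 2 : ℝ) = (2 : ℝ) ^ (Real.logb 2 f / 2) := by
    conv_lhs => rw [hfL]
    rw [← Real.rpow_mul (by norm_num)]
    ring_nf
  have hrr : f ^ (1 / 2 : ℝ) * f ^ (1 / 2 : ℝ) = f := by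
    rw [← Real.rpow_add hf0]; norm_num
  have hr0 : 0 < f ^ (1 / 2 : ℝ) := by positivity
  set L := Real.logb 2 f
  set r := f ^ (1 / 2 : ℝ)
  have hterm : ∀ i ∈ Finset.Icc 1 l,
      a i / i ≤ 2 * Δ / L * a i + if (i : ℝ) ≤ L / (2 * Δ) then c * r else 0 := by
    intro i hi
    have hi1 : 1 ≤ i := (Finset.mem_Icc.mp hi).1
    have hi' : (1 : ℝ) ≤ i := by exact_mod_cast hi1
    have hai := ha0 i hi1
    split_ifs with h
    · have h1 : a i / i ≤ a i := div_le_self hai hi'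
      have h2 : (i : ℝ) * Δ ≤ L / 2 := by
        rw [le_div_iff₀ (by positivity)] at h
        linarith
      have h3 : (2 : ℝ) ^ ((i : ℝ) * Δ) ≤ r := by
        rw [hr]
        exact Real.rpow_le_rpow_of_exponent_le (by norm_num) h2
      have h4 : 0 ≤ 2 * Δ / L * a i := by positivity
      have h5 : c * (2 : ℝ) ^ ((i : ℝ) * Δ) ≤ c * r := by gcongr
      linarith [ha i hi1]
    · rw [not_le, div_lt_iff₀ (by positivity)] at h
      rw [add_zero, div_le_iff₀ (by linarith), div_mul_eq_mul_div, div_mul_eq_mul_div,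
        le_div_iff₀ hL]
      nlinarith
  have hcount : (∑ i ∈ Finset.Icc 1 l, if (i : ℝ) ≤ L / (2 * Δ) then c * r else 0)
      ≤ L / 2 * (c * r) := by
    rw [← Finset.sum_filter, Finset.sum_const, nsmul_eq_mul]
    have hsub : (Finset.Icc 1 l).filter (fun i : ℕ => (i : ℝ) ≤ L / (2 * Δ))
        ⊆ Finset.Icc 1 ⌊L / (2 * Δ)⌋₊ := by
      intro i hi
      simp only [Finset.mem_filter, Finset.mem_Icc] at hi ⊢
      exact ⟨hi.1.1, Nat.le_floor hi.2⟩
    have hcard := Finset.card_le_card hsub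
    rw [Nat.card_Icc, Nat.add_sub_cancel] at hcard
    have h1 : (⌊L / (2 * Δ)⌋₊ : ℝ) ≤ L / (2 * Δ) := Nat.floor_le (by positivity)
    have h2 : L / (2 * Δ) ≤ L / 2 := by
      apply div_le_div_of_nonneg_left hL.le <;> linarith
    gcongr
    exact (Nat.cast_le.mpr hcard).trans (h1.trans h2)
  have hsum : (∑ i ∈ Finset.Icc 1 l, a i / i) ≤ 2 * Δ / L * f + L / 2 * (c * r) := by
    refine (Finset.sum_le_sum hterm).trans ?_
    rw [Finset.sum_add_distrib, ← Finset.mul_sum]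
    gcongr
  rw [div_le_div_iff₀ hf0 hL]
  have hkey : L ^ 2 * (c * r) ≤ 64 * r * (c * r) := by gcongr
  calc (∑ i ∈ Finset.Icc 1 l, a i / i) * L
      ≤ (2 * Δ / L * f + L / 2 * (c * r)) * L := by gcongr
    _ = 2 * Δ * f + L ^ 2 * (c * r) / 2 := by field_simp
    _ ≤ 2 * Δ * f + 64 * r * (c * r) / 2 := by gcongr
    _ = (32 * c + 2 * Δ) * f := by linear_combination 32 * c * hrr

/-- Series lemma from the appendix: if `0 ≤ aᵢ ≤ c·2^{iΔ}` and `f ≥ ∑_{i=1}^l aᵢ`, `f ≥ 2`,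
then `(∑_{i=1}^l aᵢ/i)/f ≤ C/log f`; consequently if `f(l) → ∞` then
`ε_l = (∑_{i=1}^l aᵢ/i)/f(l) → 0`. -/
theorem appendix_series_lemma (c Δ : ℝ) (hc : 1 ≤ c) (hΔ : 1 ≤ Δ) :
    ∃ C : ℝ, 0 < C ∧
      (∀ a : ℕ → ℝ,
        (∀ i, 1 ≤ i → 0 ≤ a i) →
        (∀ i : ℕ, 1 ≤ i → a i ≤ c * (2 : ℝ) ^ ((i : ℝ) * Δ)) →
        ∀ l : ℕ, 1 ≤ l → ∀ f : ℝ, 2 ≤ f →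
          (∑ i ∈ Finset.Icc 1 l, a i) ≤ f →
          (∑ i ∈ Finset.Icc 1 l, a i / i) / f ≤ C / Real.logb 2 f) ∧
      (∀ a : ℕ → ℝ,
        (∀ i, 1 ≤ i → 0 ≤ a i) →
        (∀ i : ℕ, 1 ≤ i → a i ≤ c * (2 : ℝ) ^ ((i : ℝ) * Δ)) →
        ∀ f : ℕ → ℝ,
          (∀ l, 1 ≤ l → (∑ i ∈ Finset.Icc 1 l, a i) ≤ f l) →
          Tendsto f atTop atTop →
          Tendsto (fun l => (∑ i ∈ Finset.Icc 1 l, a i / i) / f l) atTop (nhds 0)) := by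
  refine ⟨32 * c + 2 * Δ, by linarith, ?_, ?_⟩
  · intro a ha0 ha l _ f hf hs
    exact weighted_sum_div_le hc hΔ ha0 ha l hf hs
  · intro a ha0 ha f hs hf
    have hlim : Tendsto (fun l => (32 * c + 2 * Δ) / Real.logb 2 (f l)) atTop (nhds 0) :=
      ((Real.tendsto_logb_atTop (by norm_num)).comp hf).const_div_atTop _
    refine tendsto_of_tendsto_of_tendsto_of_le_of_le' tendsto_const_nhds hlim ?_ ?_
    · filter_upwards [hf.eventually_ge_atTop 2] with l hl
      refine div_nonneg (Finset.sum_nonneg fun i hi => ?_) (by linarith)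
      exact div_nonneg (ha0 i (Finset.mem_Icc.mp hi).1) (Nat.cast_nonneg i)
    · filter_upwards [hf.eventually_ge_atTop 2, eventually_ge_atTop 1] with l hl hl1
      exact weighted_sum_div_le hc hΔ ha0 ha l hl (hs l hl1)
end
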